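/- Let T be a noetherian commutative ring, m ≥ 2, α₁ < ⋯ < α_m natural numbers, d = gcd(α₁,...,α_m), and z₁, z₂ ∈ T. Then z₁^{α_m + d} - z₂^{α_m + d} lies in the integral closure of the ideal of T generated by z₁^{α₁} - z₂^{α₁}, ..., z₁^{α_m} - z₂^{α_m}. -/

import Mathlib

/-!
Write `P = (z₁, z₂)`, `f a = z₁ ^ a - z₂ ^ a` and `Q n = ∑ᵢ f (αᵢ) P ^ (n - αᵢ)`. Let `S` be the set
of those `a` with `f a · P ^ n ⊆ Q (n + a)` for all large `n` (`EventuallyLE`). Every `αᵢ` is in `S`.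
The identity `f (a + b) = z₁ ^ b f a + z₂ ^ a f b` shows that `S` is closed under addition, and, since
`P ^ n = (z₁ ^ b, z₂ ^ b) P ^ (n - b)` for `n ≥ 2 b` (`pair_pow_le`), also under subtraction. By the
Euclidean algorithm `S` contains the gcd `d` of the `αᵢ`, hence also `N = α_m + d`.

Let `I` be the ideal generated by the `f (αᵢ)`. Since `N ≥ αᵢ` for all `i`, it follows that
`f N · P ^ n ⊆ Q (n + N) ⊆ I P ^ n` for large `n`. Applying Cayley–Hamilton to multiplication by `f N`
on `P ^ n`, which contains a power of `f N` because `N > 0`, gives an equation of integral dependence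
(`memIdealIntegralClosure_of_mul_le`).
-/

/-- `t` lies in the integral closure of the ideal `I`. -/
def MemIdealIntegralClosure {T : Type*} [CommRing T] (I : Ideal T) (t : T) : Prop :=
  ∃ n : ℕ, 0 < n ∧ ∃ c : ℕ → T, (∀ i, c i ∈ I ^ i) ∧
    t ^ n + ∑ i ∈ Finset.range n, c (i + 1) * t ^ (n - (i + 1)) = 0

section PowDiff

variable {T : Type*} [CommRing T]

/-- The determinant trick: if `t J ⊆ I J` for a finitely generated ideal `J` containing a power
of `t`, then `t` lies in the integral closure of `I`. -/
theorem memIdealIntegralClosure_of_mul_le {I J : Ideal T} (hJ : J.FG) {t : T} {k : ℕ}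
    (hk : t ^ k ∈ J) (h : Ideal.span {t} * J ≤ I * J) : MemIdealIntegralClosure I t := by
  have : Module.Finite T J := Module.Finite.iff_fg.mpr hJ
  have hr : LinearMap.range (LinearMap.lsmul T J t) ≤ I • (⊤ : Submodule T J) := by
    rintro _ ⟨j, rfl⟩
    have hj : (t * j : T) ∈ I * J :=
      h (Ideal.mul_mem_mul (Ideal.mem_span_singleton_self t) j.2)
    have hm : Submodule.map J.subtype (I • ⊤) = I * J := by
      rw [Submodule.map_smul'', Submodule.map_subtype_top, smul_eq_mul]
    rw [← hm] at hj
    obtain ⟨j', hj', e⟩ := hj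
    rwa [show LinearMap.lsmul T J t j = j' from Subtype.ext e.symm]
  obtain ⟨p, hp, -, hc, h0⟩ :=
    LinearMap.exists_monic_and_natDegree_eq_and_coeff_mem_pow_and_aeval_eq_zero T _ I hr
  have hpt : p.eval t * t ^ k = 0 := by
    have h1 : ∀ q : Polynomial T, ∀ j : J,
        ((Polynomial.aeval (LinearMap.lsmul T J t) q j : J) : T) = q.eval t * j := by
      intro q j
      have : Polynomial.aeval (algebraMap T (Module.End T J) t) q j = q.eval t • j := by
        rw [Polynomial.aeval_algebraMap_apply]
        simp
      exact congrArg Subtype.val this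
    have h2 := h1 p ⟨_, hk⟩
    rw [h0] at h2
    simpa using h2.symm
  -- the relation used is the one given by `p * X ^ (k + 1)`; the extra factor `X` makes `n` positive
  refine ⟨p.natDegree + (k + 1), by omega,
    fun i => if i ≤ p.natDegree then p.coeff (p.natDegree - i) else 0, ?_, ?_⟩
  · intro i
    dsimp only
    split_ifs with hi
    · simpa [Nat.sub_sub_self hi] using hc (p.natDegree - i)
    · exact zero_mem _
  · have h3 : p.eval t = t ^ p.natDegree + ∑ i ∈ Finset.range p.natDegree,
        p.coeff (p.natDegree - (i + 1)) * t ^ (p.natDegree - (i + 1)) := by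
      rw [Polynomial.eval_eq_sum_range, Finset.sum_range_succ, hp.coeff_natDegree, one_mul, add_comm,
        ← Finset.sum_range_reflect]
      congr 1
      refine Finset.sum_congr rfl fun i _ => ?_
      rw [Nat.sub_sub, add_comm 1 i]
    have h4 : p.eval t * t ^ (k + 1) = 0 := by
      rw [pow_succ, ← mul_assoc, hpt, zero_mul]
    refine Eq.trans ?_ h4
    rw [h3, add_mul, ← pow_add, Finset.sum_mul, add_right_inj,
      Finset.sum_range_add, ← add_zero (∑ i ∈ Finset.range p.natDegree, _ * t ^ (k + 1))]
    congr 1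
    · refine Finset.sum_congr rfl fun i hi => ?_
      have := Finset.mem_range.mp hi
      dsimp only
      rw [if_pos (by omega), mul_assoc, ← pow_add]
      congr 2
      omega
    · refine Finset.sum_eq_zero fun i _ => ?_
      dsimp only
      rw [if_neg (by omega), zero_mul]

/-- A monomial of degree at least `2 b` in `x` and `y` is divisible by `x ^ b` or by `y ^ b`. -/
theorem pair_pow_le (x y : T) {b n : ℕ} (h : 2 * b ≤ n) :
    Ideal.span {x, y} ^ n ≤
      Ideal.span {x ^ b} * Ideal.span {x, y} ^ (n - b) ⊔
        Ideal.span {y ^ b} * Ideal.span {x, y} ^ (n - b) := by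
  have hx : Ideal.span {x} ≤ Ideal.span {x, y} := Ideal.span_mono (by simp)
  have hy : Ideal.span {y} ≤ Ideal.span {x, y} := Ideal.span_mono (by simp)
  have hP : Ideal.span {x, y} = Ideal.span {x} + Ideal.span {y} := Ideal.span_insert _ _
  conv_lhs => rw [hP, add_pow]
  rw [Ideal.sum_eq_sup]
  refine Finset.sup_le fun i hi => Ideal.mul_le_left.trans ?_
  have hi' : i < n + 1 := Finset.mem_range.mp hi
  rcases le_total b i with hb | hb
  · refine le_trans ?_ le_sup_left
    calc Ideal.span {x} ^ i * Ideal.span {y} ^ (n - i) = Ideal.span {x ^ b} * (Ideal.span {x} ^ (i - b) * Ideal.span {y} ^ (n - i)) := by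
          rw [← Ideal.span_singleton_pow, ← mul_assoc, ← pow_add]
          congr 2
          omega
      _ ≤ Ideal.span {x ^ b} * (Ideal.span {x, y} ^ (i - b) * Ideal.span {x, y} ^ (n - i)) := by
          gcongr
      _ = _ := by
          rw [← pow_add]
          congr 2
          omega
  · refine le_trans ?_ le_sup_right
    calc Ideal.span {x} ^ i * Ideal.span {y} ^ (n - i) = Ideal.span {y ^ b} * (Ideal.span {x} ^ i * Ideal.span {y} ^ (n - i - b)) := by
          rw [← Ideal.span_singleton_pow, mul_left_comm, ← pow_add]
          congr 2
          omega
      _ ≤ Ideal.span {y ^ b} * (Ideal.span {x, y} ^ i * Ideal.span {x, y} ^ (n - i - b)) := by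
          gcongr
      _ = _ := by
          rw [← pow_add]
          congr 2
          omega

/-- The difference `x ^ a - y ^ a` multiplies `(x, y) ^ n` into `Q (n + a)` for all large `n`. The
family `Q` is indexed by total degree. -/
def EventuallyLE (x y : T) (Q : ℕ → Ideal T) (a : ℕ) : Prop :=
  ∃ n₀, ∀ n ≥ n₀, ∀ w ∈ Ideal.span {x, y} ^ n, (x ^ a - y ^ a) * w ∈ Q (n + a)

namespace EventuallyLE

variable {x y : T} {Q : ℕ → Ideal T} {a b : ℕ}

theorem zero : EventuallyLE x y Q 0 := ⟨0, fun n _ w _ => by simp⟩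

theorem pow_mul_mem (u : T) (hu : u ∈ Ideal.span {x, y}) (k : ℕ) {n : ℕ} {w : T}
    (hw : w ∈ Ideal.span {x, y} ^ n) : u ^ k * w ∈ Ideal.span {x, y} ^ (n + k) := by
  rw [add_comm, pow_add]
  exact Ideal.mul_mem_mul (Ideal.pow_mem_pow hu k) hw

theorem left_mem : x ∈ Ideal.span {x, y} := Ideal.subset_span (by simp)

theorem right_mem : y ∈ Ideal.span {x, y} := Ideal.subset_span (by simp)

theorem add (ha : EventuallyLE x y Q a) (hb : EventuallyLE x y Q b) :
    EventuallyLE x y Q (a + b) := by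
  obtain ⟨n₁, h₁⟩ := ha
  obtain ⟨n₂, h₂⟩ := hb
  refine ⟨n₁ + n₂, fun n hn w hw => ?_⟩
  have e : (x ^ (a + b) - y ^ (a + b)) * w =
      (x ^ a - y ^ a) * (x ^ b * w) + (x ^ b - y ^ b) * (y ^ a * w) := by ring
  rw [e]
  refine add_mem ?_ ?_
  · convert h₁ (n + b) (by omega) _ (pow_mul_mem x left_mem b hw) using 2
    omega
  · convert h₂ (n + a) (by omega) _ (pow_mul_mem y right_mem a hw) using 2
    omega

/-- Both `x ^ b f a` and `y ^ b f a` are combinations of `f (a + b)` and `f b`, where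
`f k = x ^ k - y ^ k`, and `x ^ b`, `y ^ b` together generate all high powers of `(x, y)`. -/
theorem of_add (hab : EventuallyLE x y Q (a + b)) (hb : EventuallyLE x y Q b) :
    EventuallyLE x y Q a := by
  obtain ⟨n₁, h₁⟩ := hab
  obtain ⟨n₂, h₂⟩ := hb
  refine ⟨n₁ + n₂ + 2 * b, fun n hn w hw => ?_⟩
  obtain ⟨_, hu, _, hv, rfl⟩ := Submodule.mem_sup.mp (pair_pow_le x y (b := b) (by omega) hw)
  obtain ⟨u, hu', rfl⟩ := Ideal.mem_span_singleton_mul.mp hu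
  obtain ⟨v, hv', rfl⟩ := Ideal.mem_span_singleton_mul.mp hv
  have e : (x ^ a - y ^ a) * (x ^ b * u + y ^ b * v) =
      ((x ^ (a + b) - y ^ (a + b)) * u - (x ^ b - y ^ b) * (y ^ a * u)) +
        ((x ^ (a + b) - y ^ (a + b)) * v - (x ^ b - y ^ b) * (x ^ a * v)) := by ring
  have h₁' : ∀ w ∈ Ideal.span {x, y} ^ (n - b),
      (x ^ (a + b) - y ^ (a + b)) * w ∈ Q (n + a) := by
    intro w hw
    convert h₁ (n - b) (by omega) w hw using 2
    omega
  have h₂' : ∀ w ∈ Ideal.span {x, y} ^ (n - b + a), (x ^ b - y ^ b) * w ∈ Q (n + a) := by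
    intro w hw
    convert h₂ (n - b + a) (by omega) w hw using 2
    omega
  rw [e]
  exact add_mem
    (sub_mem (h₁' u hu') (h₂' _ (pow_mul_mem y right_mem a hu')))
    (sub_mem (h₁' v hv') (h₂' _ (pow_mul_mem x left_mem a hv')))

theorem mod (ha : EventuallyLE x y Q a) (hb : EventuallyLE x y Q b) :
    EventuallyLE x y Q (a % b) := by
  have hmul : ∀ k, EventuallyLE x y Q (b * k) := by
    intro k
    induction k with
    | zero => exact zero
    | succ k ih => exact ih.add hb
  refine of_add (b := b * (a / b)) ?_ (hmul _)
  rwa [Nat.mod_add_div]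

theorem gcd (ha : EventuallyLE x y Q a) (hb : EventuallyLE x y Q b) :
    EventuallyLE x y Q (Nat.gcd a b) := by
  induction a, b using Nat.gcd.induction with
  | H0 n => simpa using hb
  | H1 m n _ ih =>
    rw [Nat.gcd_rec]
    exact ih (hb.mod ha) ha

theorem finset_gcd {ι : Type*} (s : Finset ι) (α : ι → ℕ)
    (h : ∀ i ∈ s, EventuallyLE x y Q (α i)) : EventuallyLE x y Q (s.gcd α) := by
  classical
  induction s using Finset.induction_on with
  | empty => simpa using zero
  | insert i s _ ih =>
    rw [Finset.gcd_insert]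
    exact (h i (by simp)).gcd (ih fun j hj => h j (by simp [hj]))

end EventuallyLE

end PowDiff

theorem pow_diff_mem_integralClosure (T : Type*) [CommRing T] [IsNoetherianRing T]
    (m : ℕ) (hm : 2 ≤ m) (α : Fin m → ℕ) (hα : StrictMono α)
    (z₁ z₂ : T) :
    MemIdealIntegralClosure
      (Ideal.span (Set.range fun i => z₁ ^ (α i) - z₂ ^ (α i)))
      (z₁ ^ (α ⟨m - 1, by omega⟩ + Finset.univ.gcd α) -
        z₂ ^ (α ⟨m - 1, by omega⟩ + Finset.univ.gcd α)) := by
  set P : Ideal T := Ideal.span {z₁, z₂} with hP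
  set I : Ideal T := Ideal.span (Set.range fun i => z₁ ^ (α i) - z₂ ^ (α i)) with hI
  set d := Finset.univ.gcd α
  set N := α ⟨m - 1, by omega⟩ + d with hN
  let Q : ℕ → Ideal T := fun n => ⨆ i, Ideal.span {z₁ ^ (α i) - z₂ ^ (α i)} * P ^ (n - α i)
  have hαN : ∀ i, α i ≤ N := fun i =>
    (hα.monotone (Fin.mk_le_mk.mpr (by omega) : i ≤ ⟨m - 1, by omega⟩)).trans (Nat.le_add_right _ _)
  have hαQ : ∀ i, EventuallyLE z₁ z₂ Q (α i) := fun i => ⟨0, fun n _ w hw => by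
    refine Ideal.mem_iSup_of_mem i (Ideal.mul_mem_mul (Ideal.mem_span_singleton_self _) ?_)
    rwa [Nat.add_sub_cancel]⟩
  obtain ⟨n, hn⟩ : EventuallyLE z₁ z₂ Q N :=
    (hαQ _).add (EventuallyLE.finset_gcd _ _ fun i _ => hαQ i)
  have hQ : Q (n + N) ≤ I * P ^ n := by
    refine iSup_le fun i => Ideal.mul_mono ?_ (Ideal.pow_le_pow_right ?_)
    · exact Ideal.span_mono (by simp)
    · have := hαN i
      omega
  have hNP : 0 < N := by
    have := hα (Fin.mk_lt_mk.mpr (by omega) : (⟨0, by omega⟩ : Fin m) < ⟨m - 1, by omega⟩)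
    omega
  have htP : z₁ ^ N - z₂ ^ N ∈ P :=
    sub_mem (Ideal.pow_mem_of_mem _ EventuallyLE.left_mem _ hNP)
      (Ideal.pow_mem_of_mem _ EventuallyLE.right_mem _ hNP)
  refine memIdealIntegralClosure_of_mul_le (IsNoetherian.noetherian (P ^ n))
    (Ideal.pow_mem_pow htP n) ?_
  refine Ideal.span_singleton_mul_le_iff.mpr fun w hw => hQ (hn n le_rfl w hw)
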